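/- Let a, b, c, m, w be natural numbers such that A_a b + c = w < min{ A_a(b+1), A_0(A_a b) }. Then w ≡_k A_a b + c provided that either (1) m ≡_k A_a(b+1) and A_a(b+1) > A_a(⟨m⟩₋₁), or (2) m ≡_k A_a b + c' for some c'. -/

import Mathlib

/-- The base-`k` Ackermann function `A_a(k, b)`:
`A_0(k, b) = k ^ b` and `A_{a+1}(k, b) = A_a^k(k, A_{a+1}(k, b-1))`,
with the auxiliary value `A_{a+1}(k, -1) = 1`
(equivalently, `A_{a+1}(k, b) = (A_a^k)^[b+1] (1)`). -/
def Ack (k : ℕ) : ℕ → ℕ → ℕ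
  | 0, b => k ^ b
  | a + 1, b => ((Ack k a)^[k])^[b + 1] 1

/-- `IsSandwich k m n a b ms` says that `(A_{a i}(k, b i))_{i=1}^n` is a
`k`-sandwiching sequence for `m`, with sandwiching values `(ms i)_{i=0}^n`:
`ms 0 = 0`; for each `i < n`, `A_{a (i+1)} (ms i) ≤ m < A_{a (i+1) + 1} (ms i)`,
`A_{a (i+1)} (b (i+1)) ≤ m < A_{a (i+1)} (b (i+1) + 1)`, and
`ms (i+1) = A_{a (i+1)} (b (i+1))`; and `A_0 (ms n) > m`. -/
structure IsSandwich (k m n : ℕ) (a b ms : ℕ → ℕ) : Prop where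
  ms_zero : ms 0 = 0
  idx_lo : ∀ i < n, Ack k (a (i + 1)) (ms i) ≤ m
  idx_hi : ∀ i < n, m < Ack k (a (i + 1) + 1) (ms i)
  arg_lo : ∀ i < n, Ack k (a (i + 1)) (b (i + 1)) ≤ m
  arg_hi : ∀ i < n, m < Ack k (a (i + 1)) (b (i + 1) + 1)
  ms_succ : ∀ i < n, ms (i + 1) = Ack k (a (i + 1)) (b (i + 1))
  halt : m < Ack k 0 (ms n)

/-- `NF k m a b c` says that `m ≡_k A_a b + c`, i.e. `m` has `k`-normal form
`A_a b + c` (so `m = A_a b + c` and the `k`-sandwiching sequence of `m` ends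
with the pair `(a, b)`). -/
def NF (k m a b c : ℕ) : Prop :=
  m = Ack k a b + c ∧
    ∃ n as bs ms, 1 ≤ n ∧ IsSandwich k m n as bs ms ∧ a = as n ∧ b = bs n

theorem ack_succ (k a b : ℕ) : Ack k (a+1) b = (Ack k a)^[k*(b+1)] 1 := by
  rw [Ack, Function.iterate_mul]

theorem iter_mono (f : ℕ → ℕ) (h : ∀ x, x < f x) : StrictMono (fun n => f^[n] 1) := by
  apply strictMono_nat_of_lt_succ
  intro n
  simp only [Function.iterate_succ_apply']
  exact h _

theorem iter_gt (f : ℕ → ℕ) (h : ∀ x, x < f x) (n : ℕ) : n < f^[n] 1 := by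
  induction n with
  | zero => simp
  | succ n ih =>
    rw [Function.iterate_succ_apply']
    have := h (f^[n] 1)
    omega

theorem ack_basic (k : ℕ) (hk : 2 ≤ k) (a : ℕ) :
    StrictMono (Ack k a) ∧ ∀ x, x < Ack k a x := by
  induction a with
  | zero =>
    constructor
    · intro x y h
      simp only [Ack]
      exact Nat.pow_lt_pow_right (by omega) h
    · intro x
      simp only [Ack]
      exact Nat.lt_pow_self (by omega)
  | succ a ih =>
    constructor
    · intro x y h
      rw [ack_succ, ack_succ]
      apply iter_mono _ ih.2
      exact Nat.mul_lt_mul_of_pos_left (by omega) (by omega)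
    · intro x
      rw [ack_succ]
      have := iter_gt _ ih.2 (k*(x+1))
      nlinarith

theorem ack_range_succ (k : ℕ) (hk : 2 ≤ k) (a y : ℕ) :
    ∃ x, y ≤ x ∧ Ack k (a+1) y = Ack k a x := by
  obtain ⟨t, ht⟩ : ∃ t, k*(y+1) = t+1 := ⟨k*(y+1)-1, by
    have : 0 < k*(y+1) := by positivity
    omega⟩
  refine ⟨(Ack k a)^[t] 1, ?_, ?_⟩
  · have := iter_gt _ (ack_basic k hk a).2 t
    nlinarith
  · rw [ack_succ, ht, Function.iterate_succ_apply']

theorem ack_range (k : ℕ) (hk : 2 ≤ k) (a a' : ℕ) (h : a ≤ a') :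
    ∀ y, ∃ x, y ≤ x ∧ Ack k a' y = Ack k a x := by
  induction a', h using Nat.le_induction with
  | base => exact fun y => ⟨y, le_rfl, rfl⟩
  | succ n hn ih =>
    intro y
    obtain ⟨z, hz, e⟩ := ack_range_succ k hk n y
    obtain ⟨x, hx, e'⟩ := ih z
    exact ⟨x, hz.trans hx, e.trans e'⟩

theorem ack_idx_mono (k : ℕ) (hk : 2 ≤ k) (a a' y : ℕ) (h : a ≤ a') :
    Ack k a y ≤ Ack k a' y := by
  obtain ⟨x, hx, e⟩ := ack_range k hk a a' h y
  rw [e]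
  exact (ack_basic k hk a).1.monotone hx

/-- upper bounds transfer -/
theorem ack_up (k : ℕ) (hk : 2 ≤ k) (a a' b y m w : ℕ) (h : a ≤ a')
    (h1 : Ack k a b ≤ m) (h2 : m < Ack k a' y) (h3 : w < Ack k a (b+1)) :
    w < Ack k a' y := by
  obtain ⟨x, hx, e⟩ := ack_range k hk a a' h y
  rw [e] at h2 ⊢
  have : b < x := (ack_basic k hk a).1.lt_iff_lt.1 (h1.trans_lt h2)
  exact h3.trans_le ((ack_basic k hk a).1.monotone this)

section
variable {k m n : ℕ} {as bs ms : ℕ → ℕ}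

theorem sw_le (hk : 2 ≤ k) (S : IsSandwich k m n as bs ms) (i : ℕ) (hi : i < n) :
    Ack k (as (i+1)) (ms i) ≤ ms (i+1) := by
  rw [S.ms_succ i hi]
  have h := (S.idx_lo i hi).trans_lt (S.arg_hi i hi)
  have := (ack_basic k hk _).1.lt_iff_lt.1 h
  exact (ack_basic k hk _).1.monotone (by omega)

theorem sw_mono (hk : 2 ≤ k) (S : IsSandwich k m n as bs ms) (i j : ℕ) (hij : i ≤ j) (hj : j ≤ n) :
    ms i ≤ ms j := by
  induction j, hij using Nat.le_induction with
  | base => exact le_rfl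
  | succ j hij ih =>
    have := sw_le hk S j (by omega)
    have h2 := (ack_basic k hk (as (j+1))).2 (ms j)
    have := ih (by omega)
    omega

theorem sw_idx (hk : 2 ≤ k) (S : IsSandwich k m n as bs ms) (i j : ℕ) (hij : i ≤ j) (hj : j < n) :
    as (j+1) ≤ as (i+1) := by
  induction j, hij using Nat.le_induction with
  | base => exact le_rfl
  | succ j hij ih =>
    refine le_trans ?_ (ih (by omega))
    by_contra hc
    have h1 := S.idx_lo (j+1) hj
    have h2 := S.arg_hi j (by omega)
    have h3 := (ack_basic k hk (as (j+1))).2 (bs (j+1))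
    rw [← S.ms_succ j (by omega)] at h3
    have h4 := (ack_basic k hk (as (j+1))).1.monotone (Nat.succ_le_of_lt h3)
    have h5 := ack_idx_mono k hk (as (j+1)) (as (j+1+1)) (ms (j+1)) (by omega)
    simp only [Nat.succ_eq_add_one] at h4
    omega
end

theorem stmt_7 (k m w a b c : ℕ) (hk : 2 ≤ k)
    (hw : Ack k a b + c = w)
    (hw1 : w < Ack k a (b + 1)) (hw2 : w < Ack k 0 (Ack k a b))
    (hcond :
      (∃ n aseq bseq ms, 1 ≤ n ∧ IsSandwich k m n aseq bseq ms ∧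
        aseq n = a ∧ bseq n = b + 1 ∧ m = Ack k a (b + 1) ∧
        Ack k a (ms (n - 1)) < Ack k a (b + 1)) ∨
      (∃ c', NF k m a b c')) :
    NF k w a b c := by
  refine ⟨hw.symm, ?_⟩
  rcases hcond with ⟨n, as, bs, ms, hn, S, rfl, hb, hm, hlt⟩ | ⟨c', hm, n, as, bs, ms, hn, S, rfl, rfl⟩
  · obtain ⟨p, rfl⟩ : ∃ p, n = p + 1 := ⟨n - 1, by omega⟩
    simp only [Nat.add_sub_cancel] at hlt
    have hpb := (ack_basic k hk _).1.lt_iff_lt.1 hlt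
    have hself := (ack_basic k hk (as (p+1))).2 b
    have hlow : ∀ i < p, ms (i+1) ≤ w := fun i hi => by
      have := sw_mono hk S (i+1) p (by omega) (by omega)
      omega
    refine ⟨p+1, as, Function.update bs (p+1) b,
      Function.update ms (p+1) (Ack k (as (p+1)) b), hn, ?_, rfl, by simp⟩
    have hms : ∀ i < p + 1, Function.update ms (p+1) (Ack k (as (p+1)) b) i = ms i := fun i hi =>
      Function.update_of_ne (by omega) _ _
    have hbs : ∀ i < p + 1, Function.update bs (p+1) b i = bs i := fun i hi =>
      Function.update_of_ne (by omega) _ _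
    constructor
    · rw [hms 0 (by omega)]; exact S.ms_zero
    · intro i hi
      rw [hms i hi]
      rcases Nat.lt_succ_iff_lt_or_eq.1 hi with h | rfl
      · exact (sw_le hk S i hi).trans (hlow i h)
      · have := (ack_basic k hk (as (i+1))).1.monotone (Nat.lt_succ_iff.1 hpb)
        omega
    · intro i hi
      rw [hms i hi]
      have := S.idx_hi i hi
      omega
    · intro i hi
      rcases Nat.lt_succ_iff_lt_or_eq.1 hi with h | rfl
      · rw [hbs (i+1) (by omega), ← S.ms_succ i hi]
        exact hlow i h
      · simp only [Function.update_self]; omega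
    · intro i hi
      rcases Nat.lt_succ_iff_lt_or_eq.1 hi with h | rfl
      · rw [hbs (i+1) (by omega)]
        have := S.arg_hi i hi
        omega
      · simpa only [Function.update_self] using hw1
    · intro i hi
      rcases Nat.lt_succ_iff_lt_or_eq.1 hi with h | rfl
      · rw [hbs (i+1) (by omega), hms (i+1) (by omega)]
        exact S.ms_succ i hi
      · simp only [Function.update_self]
    · simpa only [Function.update_self] using hw2
  · obtain ⟨p, rfl⟩ : ∃ p, n = p + 1 := ⟨n - 1, by omega⟩
    have hlast := S.ms_succ p (by omega)
    have hlow : ∀ i < p + 1, ms (i+1) ≤ w := fun i hi => by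
      have := sw_mono hk S (i+1) (p+1) (by omega) (by omega)
      omega
    have hbm := S.arg_lo p (by omega)
    refine ⟨p+1, as, bs, ms, hn, ⟨S.ms_zero, ?_, ?_, ?_, ?_, S.ms_succ, ?_⟩, rfl, rfl⟩
    · exact fun i hi => (sw_le hk S i hi).trans (hlow i hi)
    · intro i hi
      have := sw_idx hk S i p (by omega) (by omega)
      exact ack_up k hk _ _ _ _ m w (by omega) hbm (S.idx_hi i hi) hw1
    · exact fun i hi => S.ms_succ i hi ▸ hlow i hi
    · intro i hi
      have := sw_idx hk S i p (by omega) (by omega)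
      exact ack_up k hk _ _ _ _ m w this hbm (S.arg_hi i hi) hw1
    · rw [hlast]; exact hw2
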